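/- Fix integers n ≥ 1 and 1 ≤ m₀ ≤ n. For each m₀ ≤ m ≤ n let F_m : {0,1}^m → {0,1}^m be a pairwise independent random function, with F_{m₀},…,F_n mutually independent, and define the random maps r^m by the downward recursion r^{n+1} = id and r^m(x) = r^{m+1}(F_m(MSB_m(x)) ‖ LSB_{n−m}(x)). For x ≠ y in {0,1}^n and m₀ ≤ m ≤ n+1 write p^m_{x,y} := Pr[r^m(x) = r^m(y)] (so p^{n+1}_{x,y} = 0). Then for all m₀ ≤ m ≤ n: (a) if LSB_{n−m}(x) ≠ LSB_{n−m}(y) then p^m_{x,y} = p^{m+1}_{x,y}, while if LSB_{n−m}(x) = LSB_{n−m}(y) then p^m_{x,y} = 2^{−m} + (1 − 2^{−m})·p^{m+1}_{x,y}; and (b) for any x' ≠ y' in {0,1}^n with LSB_{n−m}(x') = LSB_{n−m}(x) and LSB_{n−m}(y') = LSB_{n−m}(y), one has p^m_{x,y} = p^m_{x',y'}. -/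

import Mathlib

open scoped BigOperators Classical

/-- Probability of an event under a (finite, weighted) probability mass function. -/
noncomputable def pr {Ω : Type*} [Fintype Ω] (p : Ω → ℝ) (E : Ω → Prop) : ℝ :=
  ∑ ω, if E ω then p ω else 0

/-- The `m` most significant bits of an `n`-bit string (index `0` is most significant). -/
def msb {n : ℕ} (m : ℕ) (h : m ≤ n) (x : Fin n → Bool) : Fin m → Bool :=
  fun s => x ⟨s.1, lt_of_lt_of_le s.2 h⟩

/-- The `k` least significant bits of an `n`-bit string (junk `false` if `k > n`;
in all uses below `k ≤ n`). -/
def lsb {n : ℕ} (k : ℕ) (x : Fin n → Bool) : Fin k → Bool :=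
  fun s => if h : n - k + (s : ℕ) < n then x ⟨n - k + s.1, h⟩ else false

/-- Replace the `m` most significant bits of `x` by `f m` applied to them,
keeping the `n - m` least significant bits: this is `f_m(MSB_m(x)) ‖ LSB_{n-m}(x)`. -/
def rStep (n : ℕ) (f : ∀ m : ℕ, (Fin m → Bool) → (Fin m → Bool)) (m : ℕ) (h : m ≤ n)
    (x : Fin n → Bool) : Fin n → Bool :=
  fun t => if ht : (t : ℕ) < m then f m (msb m h x) ⟨t.1, ht⟩ else x t

/-- The downward recursion `r^{n+1} = id`, `r^m(x) = r^{m+1}(f_m(MSB_m(x)) ‖ LSB_{n-m}(x))`. -/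
def rRec (n : ℕ) (f : ∀ m : ℕ, (Fin m → Bool) → (Fin m → Bool)) (m : ℕ)
    (x : Fin n → Bool) : Fin n → Bool :=
  if h : m ≤ n then rRec n f (m + 1) (rStep n f m h x) else x
termination_by n + 1 - m
decreasing_by omega

section Pr

variable {Ω : Type*} [Fintype Ω] {p : Ω → ℝ}

theorem pr_congr {E E' : Ω → Prop} (h : ∀ ω, E ω ↔ E' ω) : pr p E = pr p E' := by
  rw [show E = E' from funext fun ω => propext (h ω)]

theorem pr_of_forall (hp1 : ∑ ω, p ω = 1) {E : Ω → Prop} (h : ∀ ω, E ω) : pr p E = 1 := by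
  simp [pr, h, hp1]

theorem pr_of_forall_not {E : Ω → Prop} (h : ∀ ω, ¬ E ω) : pr p E = 0 := by
  simp [pr, h]

/-- Law of total probability. -/
theorem pr_eq_sum_fiber {α : Type*} [Fintype α] (X : Ω → α) (E : Ω → Prop) :
    pr p E = ∑ a, pr p (fun ω => X ω = a ∧ E ω) := by
  unfold pr
  rw [Finset.sum_comm]
  refine Finset.sum_congr rfl fun ω _ => ?_
  by_cases h : E ω <;> simp [h]

theorem sum_pr_fiber (hp1 : ∑ ω, p ω = 1) {α : Type*} [Fintype α] (X : Ω → α) :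
    ∑ a, pr p (fun ω => X ω = a) = 1 := by
  rw [← pr_of_forall hp1 (fun _ : Ω => trivial), pr_eq_sum_fiber X]
  simp

theorem pr_comp_eq_sum {α : Type*} [Fintype α] (X : Ω → α) (P : α → Prop)
    [DecidablePred P] :
    pr p (fun ω => P (X ω)) = ∑ a, if P a then pr p (fun ω => X ω = a) else 0 := by
  rw [pr_eq_sum_fiber X]
  refine Finset.sum_congr rfl fun a _ => ?_
  split_ifs with h
  · exact pr_congr fun ω => ⟨fun hω => hω.1, fun hω => ⟨hω, hω ▸ h⟩⟩
  · exact pr_of_forall_not fun ω hω => h (hω.1 ▸ hω.2)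

/-- Conditioning on the first of two independent random variables. -/
theorem pr_comp₂_eq_sum_of_indep {α β : Type*} [Fintype α] [Fintype β] (X : Ω → α) (Y : Ω → β)
    (hXY : ∀ a b, pr p (fun ω => X ω = a ∧ Y ω = b)
      = pr p (fun ω => X ω = a) * pr p (fun ω => Y ω = b))
    (R : α → β → Prop) :
    pr p (fun ω => R (X ω) (Y ω))
      = ∑ a, pr p (fun ω => X ω = a) * pr p (fun ω => R a (Y ω)) := by
  rw [pr_comp_eq_sum (fun ω => (X ω, Y ω)) (fun c => R c.1 c.2), Fintype.sum_prod_type]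
  refine Finset.sum_congr rfl fun a _ => ?_
  rw [pr_comp_eq_sum Y (R a), Finset.mul_sum]
  refine Finset.sum_congr rfl fun b _ => ?_
  simp only [Prod.mk.injEq, hXY, mul_ite, mul_zero]

/-- A factorising joint law on an initial range of indices also factorises
on every upper subrange. -/
theorem pr_forall_Icc_eq_prod {V : ℕ → Type*} [∀ m, Fintype (V m)] (hp1 : ∑ ω, p ω = 1)
    (F : ∀ m, Ω → V m) {m₀ n : ℕ}
    (hInd : ∀ g : ∀ m, V m, pr p (fun ω => ∀ m ∈ Finset.Icc m₀ n, F m ω = g m)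
      = ∏ m ∈ Finset.Icc m₀ n, pr p (fun ω => F m ω = g m))
    {k : ℕ} (hk : m₀ ≤ k) (g : ∀ m, V m) :
    pr p (fun ω => ∀ m ∈ Finset.Icc k n, F m ω = g m)
      = ∏ m ∈ Finset.Icc k n, pr p (fun ω => F m ω = g m) := by
  induction k, hk using Nat.le_induction generalizing g with
  | base => exact hInd g
  | succ k _ ih =>
    rcases Nat.lt_or_ge n k with hkn | hkn
    · rw [Finset.Icc_eq_empty (by omega)]
      simpa using pr_of_forall hp1 fun _ : Ω => trivial
    have hmem : k ∉ Finset.Icc (k + 1) n := by simp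
    have hne : ∀ i ∈ Finset.Icc (k + 1) n, i ≠ k := fun i hi h => hmem (h ▸ hi)
    rw [pr_eq_sum_fiber (F k)]
    have hterm : ∀ a, pr p (fun ω => F k ω = a ∧ ∀ m ∈ Finset.Icc (k + 1) n, F m ω = g m)
        = pr p (fun ω => F k ω = a)
          * ∏ m ∈ Finset.Icc (k + 1) n, pr p (fun ω => F m ω = g m) := by
      intro a
      have h := ih (Function.update g k a)
      rw [← Finset.insert_Icc_add_one_left_eq_Icc hkn, Finset.prod_insert hmem] at h
      rw [Finset.prod_congr rfl fun i hi => by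
        rw [Function.update_of_ne (hne i hi)], Function.update_self] at h
      rw [← h]
      refine pr_congr fun ω => ?_
      rw [Finset.forall_mem_insert, Function.update_self]
      refine and_congr_right fun _ => forall₂_congr fun i hi => ?_
      rw [Function.update_of_ne (hne i hi)]
    rw [Finset.sum_congr rfl fun a _ => hterm a, ← Finset.sum_mul, sum_pr_fiber hp1, one_mul]

/-- The variable at the lowest index of a range is independent of the ones above it. -/
theorem pr_eq_and_restrict_eq {V : ℕ → Type*} [∀ m, Fintype (V m)] (hp1 : ∑ ω, p ω = 1)
    (F : ∀ m, Ω → V m) {m₀ n : ℕ}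
    (hInd : ∀ g : ∀ m, V m, pr p (fun ω => ∀ m ∈ Finset.Icc m₀ n, F m ω = g m)
      = ∏ m ∈ Finset.Icc m₀ n, pr p (fun ω => F m ω = g m))
    {k : ℕ} (hk : m₀ ≤ k) (hkn : k ≤ n) (g : ∀ m, V m) :
    pr p (fun ω => F k ω = g k ∧ ∀ m ∈ Finset.Icc (k + 1) n, F m ω = g m)
      = pr p (fun ω => F k ω = g k)
        * pr p (fun ω => ∀ m ∈ Finset.Icc (k + 1) n, F m ω = g m) := by
  have h := pr_forall_Icc_eq_prod hp1 F hInd hk g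
  rw [← Finset.insert_Icc_add_one_left_eq_Icc hkn, Finset.prod_insert (by simp),
    ← pr_forall_Icc_eq_prod hp1 F hInd (by omega : m₀ ≤ k + 1) g] at h
  rw [← h]
  exact pr_congr fun ω => by rw [Finset.forall_mem_insert]

/-- Two values of a pairwise independent function collide with the uniform probability. -/
theorem pr_apply_eq_apply {m : ℕ} (F : Ω → (Fin m → Bool) → (Fin m → Bool)) (x y : Fin m → Bool)
    (h : ∀ a b, pr p (fun ω => F ω x = a ∧ F ω y = b) = ((1 : ℝ) / 2 ^ m) ^ 2) :
    pr p (fun ω => F ω x = F ω y) = 1 / 2 ^ m := by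
  rw [pr_eq_sum_fiber (fun ω => F ω x)]
  have hterm : ∀ a, pr p (fun ω => F ω x = a ∧ F ω x = F ω y) = ((1 : ℝ) / 2 ^ m) ^ 2 := by
    intro a
    rw [← h a a]
    exact pr_congr fun ω => and_congr_right fun hx => by rw [hx, eq_comm]
  rw [Finset.sum_congr rfl fun a _ => hterm a]
  simp
  field_simp

end Pr

section Bits

variable {n m : ℕ}

theorem lsb_eq_iff (hm : m ≤ n) (x y : Fin n → Bool) :
    lsb (n - m) x = lsb (n - m) y ↔ ∀ t : Fin n, m ≤ t → x t = y t := by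
  constructor
  · intro h t ht
    have := congrFun h ⟨t - m, by omega⟩
    have e : n - (n - m) + ((t : ℕ) - m) = t := by omega
    simpa [lsb, e] using this
  · intro h
    funext s
    unfold lsb
    split_ifs with hs
    · exact h _ (by simp only; omega)
    · rfl

/-- Apply `h` to the `m` most significant bits, keeping the other bits. -/
def replaceMsb (hm : m ≤ n) (h : (Fin m → Bool) → (Fin m → Bool)) (x : Fin n → Bool) :
    Fin n → Bool :=
  fun t => if ht : (t : ℕ) < m then h (msb m hm x) ⟨t.1, ht⟩ else x t

theorem replaceMsb_of_le (hm : m ≤ n) (h : (Fin m → Bool) → (Fin m → Bool)) (x : Fin n → Bool)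
    {t : Fin n} (ht : m ≤ t) : replaceMsb hm h x t = x t := by
  simp [replaceMsb, Nat.not_lt.2 ht]

theorem replaceMsb_eq_iff (hm : m ≤ n) (h : (Fin m → Bool) → (Fin m → Bool))
    (x y : Fin n → Bool) :
    replaceMsb hm h x = replaceMsb hm h y ↔
      h (msb m hm x) = h (msb m hm y) ∧ ∀ t : Fin n, m ≤ t → x t = y t := by
  constructor
  · intro e
    refine ⟨funext fun s => ?_, fun t ht => ?_⟩
    · simpa [replaceMsb] using congrFun e ⟨s, by omega⟩
    · rw [← replaceMsb_of_le hm h x ht, e, replaceMsb_of_le hm h y ht]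
  · rintro ⟨h₁, h₂⟩
    funext t
    by_cases ht : (t : ℕ) < m
    · simp [replaceMsb, ht, h₁]
    · rw [replaceMsb_of_le hm h x (not_lt.1 ht), replaceMsb_of_le hm h y (not_lt.1 ht),
        h₂ t (not_lt.1 ht)]

theorem msb_ne_msb (hm : m ≤ n) {x y : Fin n → Bool} (hxy : x ≠ y)
    (h : ∀ t : Fin n, m ≤ t → x t = y t) : msb m hm x ≠ msb m hm y := by
  refine fun e => hxy (funext fun t => ?_)
  by_cases ht : (t : ℕ) < m
  · exact congrFun e ⟨t, ht⟩
  · exact h t (not_lt.1 ht)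

theorem rRec_of_le (f : ∀ m : ℕ, (Fin m → Bool) → (Fin m → Bool)) (hm : m ≤ n)
    (x : Fin n → Bool) : rRec n f m x = rRec n f (m + 1) (replaceMsb hm (f m) x) := by
  rw [rRec, dif_pos hm]
  rfl

theorem rRec_succ_self (f : ∀ m : ℕ, (Fin m → Bool) → (Fin m → Bool)) (x : Fin n → Bool) :
    rRec n f (n + 1) x = x := by
  rw [rRec, dif_neg (by omega)]

theorem rRec_congr {f g : ∀ m : ℕ, (Fin m → Bool) → (Fin m → Bool)} (hm : m ≤ n + 1)
    (h : ∀ i ∈ Finset.Icc m n, f i = g i) (x : Fin n → Bool) : rRec n f m x = rRec n g m x := by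
  induction hm using Nat.decreasingInduction generalizing x with
  | self => rw [rRec_succ_self, rRec_succ_self]
  | of_succ k hk ih =>
    have hkn : k ≤ n := Nat.lt_succ_iff.1 hk
    rw [rRec_of_le f hkn, rRec_of_le g hkn, h k (by simp [hkn])]
    refine ih (fun i hi => h i ?_) _
    simp only [Finset.mem_Icc] at hi ⊢
    omega

end Bits

section Collision

variable {Ω : Type*} [Fintype Ω] {p : Ω → ℝ} {n m₀ : ℕ}
  {F : ∀ m : ℕ, Ω → (Fin m → Bool) → (Fin m → Bool)}

/-- Conditioning the collision event on the value of the function applied first. -/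
theorem pr_rRec_eq_sum (hp1 : ∑ ω, p ω = 1)
    (hInd : ∀ g : ∀ m : ℕ, (Fin m → Bool) → (Fin m → Bool),
      pr p (fun ω => ∀ m ∈ Finset.Icc m₀ n, F m ω = g m)
        = ∏ m ∈ Finset.Icc m₀ n, pr p (fun ω => F m ω = g m))
    {m : ℕ} (hm₀ : m₀ ≤ m) (hm : m ≤ n) (x y : Fin n → Bool) :
    pr p (fun ω => rRec n (fun i => F i ω) m x = rRec n (fun i => F i ω) m y)
      = ∑ h, pr p (fun ω => F m ω = h)
        * pr p (fun ω => rRec n (fun i => F i ω) (m + 1) (replaceMsb hm h x)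
          = rRec n (fun i => F i ω) (m + 1) (replaceMsb hm h y)) := by
  let Y : Ω → ∀ i : Finset.Icc (m + 1) n, (Fin i → Bool) → (Fin i → Bool) := fun ω i => F i ω
  let ext : (∀ i : Finset.Icc (m + 1) n, (Fin i → Bool) → (Fin i → Bool)) →
      ∀ i : ℕ, (Fin i → Bool) → (Fin i → Bool) :=
    fun b i => if hi : i ∈ Finset.Icc (m + 1) n then b ⟨i, hi⟩ else id
  have hext : ∀ ω z, rRec n (ext (Y ω)) (m + 1) z = rRec n (fun i => F i ω) (m + 1) z :=
    fun ω z => rRec_congr (by omega) (fun i hi => by simp only [ext, dif_pos hi, Y]) z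
  have hY : ∀ ω b (g : ∀ i : ℕ, (Fin i → Bool) → (Fin i → Bool)),
      (∀ i : Finset.Icc (m + 1) n, g i = b i) →
      (Y ω = b ↔ ∀ i ∈ Finset.Icc (m + 1) n, F i ω = g i) := by
    intro ω b g hg
    rw [funext_iff, Subtype.forall]
    exact forall₂_congr fun i hi => by rw [hg ⟨i, hi⟩]
  have key := pr_comp₂_eq_sum_of_indep (p := p) (F m) Y (fun a b => by
      let g := Function.update (ext b) m a
      have hg : ∀ i : Finset.Icc (m + 1) n, g i = b i := by
        rintro ⟨i, hi⟩
        have hne : i ≠ m := by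
          simp only [Finset.mem_Icc] at hi
          omega
        simp only [g, Function.update_of_ne hne, ext, dif_pos hi]
      have hgm : g m = a := Function.update_self ..
      have h := pr_eq_and_restrict_eq hp1 F hInd hm₀ hm g
      rw [hgm] at h
      simpa only [hY _ b g hg] using h)
    (fun a b => rRec n (ext b) (m + 1) (replaceMsb hm a x)
      = rRec n (ext b) (m + 1) (replaceMsb hm a y))
  simp only [hext] at key
  rw [← key]
  exact pr_congr fun ω => by rw [rRec_of_le _ hm, rRec_of_le _ hm]

end Collision

/-- Recursive structure of the collision probabilities
`p^m_{x,y} = Pr[r^m(x) = r^m(y)]` of the multi-cut labelling maps: `p^{n+1}_{x,y} = 0`;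
if `LSB_{n-m}(x) ≠ LSB_{n-m}(y)` then `p^m = p^{m+1}`, while if they agree then
`p^m = 2^{-m} + (1 - 2^{-m}) p^{m+1}`; moreover `p^m_{x,y}` depends only on
`LSB_{n-m}(x)` and `LSB_{n-m}(y)`. -/
theorem statement5
    (n m₀ : ℕ) (hn : 1 ≤ n) (hm₀ : 1 ≤ m₀) (hm₀n : m₀ ≤ n)
    (Ω : Type*) [Fintype Ω] (p : Ω → ℝ)
    (hp0 : ∀ ω, 0 ≤ p ω) (hp1 : ∑ ω, p ω = 1)
    (F : ∀ m : ℕ, Ω → (Fin m → Bool) → (Fin m → Bool))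
    -- each `F m` (for `m₀ ≤ m ≤ n`) is a pairwise independent random function
    (hFpair : ∀ m, m₀ ≤ m → m ≤ n → ∀ x y : Fin m → Bool, x ≠ y →
      ∀ a b : Fin m → Bool,
        pr p (fun ω => F m ω x = a ∧ F m ω y = b) = ((1 : ℝ) / 2 ^ m) ^ 2)
    -- `F_{m₀}, …, F_n` are mutually independent
    (hInd : ∀ g : ∀ m : ℕ, (Fin m → Bool) → (Fin m → Bool),
      pr p (fun ω => ∀ m ∈ Finset.Icc m₀ n, F m ω = g m)
        = ∏ m ∈ Finset.Icc m₀ n, pr p (fun ω => F m ω = g m)) :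
    (∀ x y : Fin n → Bool, x ≠ y →
      pr p (fun ω => rRec n (fun m' => F m' ω) (n + 1) x
          = rRec n (fun m' => F m' ω) (n + 1) y) = 0) ∧
    ∀ m, m₀ ≤ m → m ≤ n → ∀ x y : Fin n → Bool, x ≠ y →
      ((lsb (n - m) x ≠ lsb (n - m) y →
          pr p (fun ω => rRec n (fun m' => F m' ω) m x = rRec n (fun m' => F m' ω) m y)
            = pr p (fun ω => rRec n (fun m' => F m' ω) (m + 1) x
                = rRec n (fun m' => F m' ω) (m + 1) y)) ∧
        (lsb (n - m) x = lsb (n - m) y →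
          pr p (fun ω => rRec n (fun m' => F m' ω) m x = rRec n (fun m' => F m' ω) m y)
            = 1 / 2 ^ m + (1 - 1 / 2 ^ m) *
                pr p (fun ω => rRec n (fun m' => F m' ω) (m + 1) x
                  = rRec n (fun m' => F m' ω) (m + 1) y)) ∧
        (∀ x' y' : Fin n → Bool, x' ≠ y' →
          lsb (n - m) x' = lsb (n - m) x → lsb (n - m) y' = lsb (n - m) y →
          pr p (fun ω => rRec n (fun m' => F m' ω) m x = rRec n (fun m' => F m' ω) m y)
            = pr p (fun ω => rRec n (fun m' => F m' ω) m x'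
                = rRec n (fun m' => F m' ω) m y'))) := by
  have hzero : ∀ x y : Fin n → Bool, x ≠ y →
      pr p (fun ω => rRec n (fun m' => F m' ω) (n + 1) x
          = rRec n (fun m' => F m' ω) (n + 1) y) = 0 := fun x y hxy =>
    pr_of_forall_not fun ω => by rwa [rRec_succ_self, rRec_succ_self]
  refine ⟨hzero, ?_⟩
  set q : ℕ → (Fin n → Bool) → (Fin n → Bool) → ℝ := fun k x y =>
    pr p (fun ω => rRec n (fun m' => F m' ω) k x = rRec n (fun m' => F m' ω) k y)
  have hlaw : ∀ m, ∑ h, pr p (fun ω => F m ω = h) = 1 := fun m => sum_pr_fiber hp1 (F m)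
  -- one downward step, given that `q (m + 1)` only depends on the bits from position `m` on
  have hstep : ∀ m, m₀ ≤ m → ∀ hm : m ≤ n,
      (∀ x y x' y' : Fin n → Bool, x ≠ y → x' ≠ y' → (∀ t : Fin n, m ≤ t → x' t = x t) →
        (∀ t : Fin n, m ≤ t → y' t = y t) → q (m + 1) x' y' = q (m + 1) x y) →
      ∀ x y : Fin n → Bool, x ≠ y →
        ((¬ ∀ t : Fin n, m ≤ t → x t = y t) → q m x y = q (m + 1) x y) ∧
        ((∀ t : Fin n, m ≤ t → x t = y t) →
          q m x y = 1 / 2 ^ m + (1 - 1 / 2 ^ m) * q (m + 1) x y) := by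
    intro m hm₀m hm hdep x y hxy
    have hsum : q m x y = ∑ h, pr p (fun ω => F m ω = h)
        * q (m + 1) (replaceMsb hm h x) (replaceMsb hm h y) :=
      pr_rRec_eq_sum hp1 hInd hm₀m hm x y
    have hq_ne : ∀ h, replaceMsb hm h x ≠ replaceMsb hm h y →
        q (m + 1) (replaceMsb hm h x) (replaceMsb hm h y) = q (m + 1) x y := fun h hne =>
      hdep _ _ _ _ hxy hne (fun _ => replaceMsb_of_le hm h x) fun _ => replaceMsb_of_le hm h y
    refine ⟨fun hlow => ?_, fun hlow => ?_⟩
    · rw [hsum, Finset.sum_congr rfl fun h _ => by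
        rw [hq_ne h fun e => hlow ((replaceMsb_eq_iff hm h x y).1 e).2], ← Finset.sum_mul,
        hlaw, one_mul]
    · have hcol : ∑ h, (if h (msb m hm x) = h (msb m hm y) then pr p (fun ω => F m ω = h) else 0)
          = 1 / 2 ^ m := by
        rw [← pr_comp_eq_sum (F m) fun h => h (msb m hm x) = h (msb m hm y)]
        exact pr_apply_eq_apply (F m) _ _ (hFpair m hm₀m hm _ _ (msb_ne_msb hm hxy hlow))
      have hterm : ∀ h, pr p (fun ω => F m ω = h)
            * q (m + 1) (replaceMsb hm h x) (replaceMsb hm h y)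
          = pr p (fun ω => F m ω = h) * q (m + 1) x y
            + (if h (msb m hm x) = h (msb m hm y) then pr p (fun ω => F m ω = h) else 0)
              * (1 - q (m + 1) x y) := by
        intro h
        split_ifs with hh
        · have hone : q (m + 1) (replaceMsb hm h x) (replaceMsb hm h y) = 1 :=
            pr_of_forall hp1 fun ω => by rw [(replaceMsb_eq_iff hm h x y).2 ⟨hh, hlow⟩]
          rw [hone]
          ring
        · rw [hq_ne h fun e => hh ((replaceMsb_eq_iff hm h x y).1 e).1]
          ring
      rw [hsum, Finset.sum_congr rfl fun h _ => hterm h, Finset.sum_add_distrib,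
        ← Finset.sum_mul, ← Finset.sum_mul, hlaw, hcol]
      ring
  have hdep : ∀ m, m ≤ n + 1 → m₀ ≤ m → ∀ x y x' y' : Fin n → Bool, x ≠ y → x' ≠ y' →
      (∀ t : Fin n, m ≤ t → x' t = x t) → (∀ t : Fin n, m ≤ t → y' t = y t) →
      q m x' y' = q m x y := by
    intro m hm
    induction hm using Nat.decreasingInduction with
    | self =>
      intro _ x y x' y' hxy hxy' _ _
      exact (hzero x' y' hxy').trans (hzero x y hxy).symm
    | of_succ k hk ih =>
      intro hk₀ x y x' y' hxy hxy' hx hy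
      have ih' : ∀ x y x' y' : Fin n → Bool, x ≠ y → x' ≠ y' →
          (∀ t : Fin n, k ≤ t → x' t = x t) → (∀ t : Fin n, k ≤ t → y' t = y t) →
          q (k + 1) x' y' = q (k + 1) x y := fun x y x' y' hxy hxy' hx hy =>
        ih (by omega) x y x' y' hxy hxy' (fun t ht => hx t (by omega)) fun t ht =>
          hy t (by omega)
      have hlow : (∀ t : Fin n, k ≤ t → x' t = y' t) ↔ ∀ t : Fin n, k ≤ t → x t = y t :=
        forall₂_congr fun t ht => by rw [hx t ht, hy t ht]
      obtain ⟨hne, heq⟩ := hstep k hk₀ (by omega) ih' x y hxy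
      obtain ⟨hne', heq'⟩ := hstep k hk₀ (by omega) ih' x' y' hxy'
      by_cases h : ∀ t : Fin n, k ≤ t → x t = y t
      · rw [heq h, heq' (hlow.2 h), ih' x y x' y' hxy hxy' hx hy]
      · rw [hne h, hne' (mt hlow.1 h), ih' x y x' y' hxy hxy' hx hy]
  intro m hm₀m hm x y hxy
  have hrec := hstep m hm₀m hm (fun x y x' y' hxy hxy' hx hy =>
    hdep (m + 1) (by omega) (by omega) x y x' y' hxy hxy' (fun t ht => hx t (by omega))
      fun t ht => hy t (by omega)) x y hxy
  simp only [ne_eq, lsb_eq_iff hm]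
  exact ⟨hrec.1, hrec.2, fun x' y' hxy' hx hy =>
    (hdep m (by omega) hm₀m x y x' y' hxy hxy' hx hy).symm⟩
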